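/- arXiv:2101.06495 — 3 statements merged into one kernel-verified Lean document; each statement's English description precedes it below -/
import Mathlib

section
/- PerOnE regret bound with per-location constants (the bound established by applying the exponentiated-gradient analysis separately in each window and each location): Suppose each V(·,λ(t)) is convex and differentiable on Ω' with |∂V/∂π(i,j)(π,λ(t))| ≤ L for all π ∈ Ω' and all (i,j). Then for any comparators π*[k] ∈ Ω' with π*[k](i,j) = 0 whenever j ∉ N^i, the PerOnE iterates π(t) with stepsize η > 0 satisfy Σ_{t=1}^T V(π(t),λ(t)) − Σ_{k=1}^K Σ_{t∈W_k} V(π*[k],λ(t)) ≤ K·(Σ_{i∈I} log|N^i|)/η + η·T·|I|·L²/2. -/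
open Finset Real Classical

/-! The gradient inequality linearises the regret, which then splits over windows and locations.
At one location of one window, PerOnE is the exponential-weights algorithm with payoffs `f = -η g`,
and the potential is the cross-entropy `crossEntropy u w = -∑ u log w` of the comparator `u`
relative to the current weights `w`: it starts at `log |N|`, it stays nonnegative, and one update
changes it by exactly `log Z - ⟨u, f⟩`, where `Z = ∑ w exp f`. Hoeffding's lemma bounds `log Z` by
`⟨w, f⟩ + (ηL)² / 2`, so every slot lowers the potential by its linear regret `⟨u - w, f⟩`, up to
`(ηL)² / 2`. Telescoping along the window and dividing by `η` gives the bound. -/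

section Windows

variable {α : Type*} [LinearOrder α] {W : Finset α}

lemma forall_mem_of_isLeast_of_next {P : α → Prop} (first : ∀ t, IsLeast (W : Set α) t → P t)
    (next : ∀ s ∈ W, ∀ t, IsLeast {u | u ∈ W ∧ s < u} t → P s → P t) : ∀ t ∈ W, P t := by
  by_contra! hbad
  obtain ⟨t, ht⟩ := (W.filter (¬P ·)).exists_minimal (by simpa [Finset.Nonempty] using hbad)
  obtain ⟨htW, htP⟩ := mem_filter.1 ht.prop
  have hbefore : ∀ s ∈ W, s < t → P s := fun s hs hst => by
    by_contra hPs
    exact ht.not_lt (mem_filter.2 ⟨hs, hPs⟩) hst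
  by_cases hpred : ∃ s ∈ W, s < t
  · obtain ⟨s, hs, hst, hmax⟩ := exists_next_left hpred
    refine htP (next s hs t ⟨⟨htW, hst⟩, fun u hu => ?_⟩ (hbefore s hs hst))
    exact not_lt.1 fun hut => (hmax u hu.1 hut).not_gt hu.2
  · push Not at hpred
    exact htP (first t ⟨htW, hpred⟩)

lemma sum_le_of_isLeast_of_next {M : Type*} [AddCommMonoid M] [PartialOrder M]
    [IsOrderedAddMonoid M] {f Φ : α → M} (hle : ∀ t ∈ W, f t ≤ Φ t)
    (next : ∀ s ∈ W, ∀ t, IsLeast {u | u ∈ W ∧ s < u} t → f s + Φ t ≤ Φ s) {t : α}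
    (ht : IsLeast (W : Set α) t) : ∑ s ∈ W, f s ≤ Φ t := by
  induction W using Finset.induction_on_min generalizing t with
  | empty => exact absurd ht.1 (notMem_empty t)
  | insert a W ha ih =>
    obtain rfl : t = a := ht.unique ⟨by simp, by simpa [lowerBounds] using fun b hb => (ha b hb).le⟩
    have htW : t ∉ W := fun h => (ha t h).false
    rw [sum_insert htW]
    rcases W.eq_empty_or_nonempty with rfl | hW
    · simpa using hle t
    · have hmin := W.isLeast_min' hW
      have htail : ∑ s ∈ W, f s ≤ Φ (W.min' hW) := by
        refine ih (fun s hs => hle s (mem_insert_of_mem hs)) (fun s hs u hu => ?_) hmin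
        have hsame : {v | v ∈ insert t W ∧ s < v} = {v | v ∈ W ∧ s < v} := by
          ext v
          have hts := ha s hs
          grind
        exact next s (mem_insert_of_mem hs) u (hsame ▸ hu)
      calc f t + ∑ s ∈ W, f s ≤ f t + Φ (W.min' hW) := by gcongr
        _ ≤ Φ t := by
          refine next t (mem_insert_self t W) _ ⟨⟨mem_insert_of_mem hmin.1, ha _ hmin.1⟩, ?_⟩
          exact fun u hu => hmin.2 (mem_of_mem_insert_of_ne hu.1 hu.2.ne')

end Windows

lemma sum_sum_eq_sum_of_existsUnique_mem {ι α M : Type*} [Fintype ι] [Fintype α] [AddCommMonoid M]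
    {W : ι → Finset α} (hW : ∀ t, ∃! k, t ∈ W k) (f : α → M) :
    ∑ k, ∑ t ∈ W k, f t = ∑ t, f t := by
  choose k hk huniq using hW
  rw [← sum_fiberwise univ k f]
  refine sum_congr rfl fun l _ => sum_congr ?_ fun _ _ => rfl
  ext t
  simpa using ⟨fun ht => (huniq t l ht).symm, fun ht => ht ▸ hk t⟩

section ExponentialWeights

variable {J : Type*}

/-- The uniform probability vector on `S` (the zero vector if `S` is empty), from which PerOnE
starts each window at a location with neighbourhood `S`. -/
noncomputable def uniformWeights (S : Finset J) (j : J) : ℝ :=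
  if j ∈ S then 1 / #S else 0

lemma uniformWeights_eq_zero_iff {S : Finset J} {j : J} : uniformWeights S j = 0 ↔ j ∉ S := by
  by_cases hj : j ∈ S
  · simp [uniformWeights, hj, ne_empty_of_mem hj]
  · simp [uniformWeights, hj]

variable [Fintype J] {u w f : J → ℝ}

/-- The partition function `∑ w exp f`, which normalises `expTilt f w`. -/
noncomputable def partitionFunction (f w : J → ℝ) : ℝ :=
  w ⬝ᵥ fun j => exp (f j)

/-- The exponential tilt of the weights `w` by the payoffs `f`. The exponentiated-gradient step with
stepsize `η` and gradient `g` is the tilt by `-η • g`. -/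
noncomputable def expTilt (f w : J → ℝ) (j : J) : ℝ :=
  w j * exp (f j) / partitionFunction f w

/-- The cross-entropy of `u` relative to `w`, the potential function of the regret analysis. Since
`log 0 = 0` here, it is the usual notion only if `u` vanishes wherever `w` does. -/
noncomputable def crossEntropy (u w : J → ℝ) : ℝ :=
  -∑ j, u j * log (w j)

lemma partitionFunction_pos (hw : w ∈ stdSimplex ℝ J) (f : J → ℝ) : 0 < partitionFunction f w := by
  obtain ⟨j, hj, hne⟩ := exists_ne_zero_of_sum_ne_zero (hw.2.trans_ne one_ne_zero)
  exact sum_pos' (fun i _ => mul_nonneg (hw.1 i) (exp_pos _).le)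
    ⟨j, hj, mul_pos ((hw.1 j).lt_of_ne' hne) (exp_pos _)⟩

lemma expTilt_mem_stdSimplex (hw : w ∈ stdSimplex ℝ J) (f : J → ℝ) :
    expTilt f w ∈ stdSimplex ℝ J := by
  have hZ := partitionFunction_pos hw f
  refine ⟨fun j => div_nonneg (mul_nonneg (hw.1 j) (exp_pos _).le) hZ.le, ?_⟩
  simp only [expTilt, ← sum_div]
  exact div_self hZ.ne'

lemma expTilt_eq_zero_iff (hw : w ∈ stdSimplex ℝ J) (f : J → ℝ) {j : J} :
    expTilt f w j = 0 ↔ w j = 0 := by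
  simp [expTilt, (partitionFunction_pos hw f).ne']

lemma exists_pmf_integral_eq_dotProduct [MeasurableSpace J] [MeasurableSingletonClass J]
    (hw : w ∈ stdSimplex ℝ J) : ∃ p : PMF J, ∀ f : J → ℝ, ∫ j, f j ∂p.toMeasure = w ⬝ᵥ f := by
  refine ⟨PMF.ofFintype (fun j => ENNReal.ofReal (w j)) ?_, fun f => ?_⟩
  · rw [← ENNReal.ofReal_sum_of_nonneg fun j _ => hw.1 j, hw.2, ENNReal.ofReal_one]
  · simp [PMF.integral_eq_sum, dotProduct, hw.1]

open ProbabilityTheory in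
lemma log_partitionFunction_le (hw : w ∈ stdSimplex ℝ J) {a b : ℝ}
    (hf : ∀ j, f j ∈ Set.Icc a b) :
    log (partitionFunction f w) ≤ w ⬝ᵥ f + (b - a) ^ 2 / 8 := by
  let _ : MeasurableSpace J := ⊤
  have : MeasurableSingletonClass J := ⟨fun _ => trivial⟩
  obtain ⟨p, hp⟩ := exists_pmf_integral_eq_dotProduct hw
  have hoeffding : mgf (fun j => f j - w ⬝ᵥ f) p.toMeasure 1 ≤ exp ((b - a) ^ 2 / 8) := by
    have hsub := hasSubgaussianMGF_of_mem_Icc (μ := p.toMeasure) (X := f)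
      measurable_from_top.aemeasurable (.of_forall hf)
    rw [hp] at hsub
    convert hsub.mgf_le 1 using 2
    simp only [div_pow, NNReal.coe_div, NNReal.coe_pow, coe_nnnorm, norm_eq_abs, sq_abs,
      NNReal.coe_ofNat, one_pow, mul_one]
    ring
  have hcentred : mgf (fun j => f j - w ⬝ᵥ f) p.toMeasure 1 =
      partitionFunction f w * exp (-(w ⬝ᵥ f)) := by
    simp only [mgf, hp, partitionFunction, dotProduct, one_mul, sub_eq_add_neg, exp_add, sum_mul,
      mul_assoc]
  rw [log_le_iff_le_exp (partitionFunction_pos hw f), add_comm, exp_add,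
    ← div_le_iff₀ (exp_pos _), div_eq_mul_inv, ← exp_neg, ← hcentred]
  exact hoeffding

lemma crossEntropy_nonneg (hu : ∀ j, 0 ≤ u j) (hw : w ∈ stdSimplex ℝ J) : 0 ≤ crossEntropy u w :=
  neg_nonneg.2 <| sum_nonpos fun j _ => mul_nonpos_of_nonneg_of_nonpos (hu j)
    (log_nonpos (hw.1 j) (mem_Icc_of_mem_stdSimplex hw j).2)

lemma crossEntropy_expTilt (hw : w ∈ stdSimplex ℝ J) (hu : ∑ j, u j = 1)
    (huw : ∀ j, w j = 0 → u j = 0) (f : J → ℝ) :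
    crossEntropy u (expTilt f w) = crossEntropy u w - u ⬝ᵥ f + log (partitionFunction f w) := by
  have hZ := (partitionFunction_pos hw f).ne'
  have hterm (j : J) : u j * log (expTilt f w j) =
      u j * log (w j) + u j * f j - u j * log (partitionFunction f w) := by
    by_cases hj : w j = 0
    · simp [huw j hj]
    · rw [expTilt, log_div (mul_ne_zero hj (exp_ne_zero _)) hZ, log_mul hj (exp_ne_zero _), log_exp]
      ring
  simp only [crossEntropy, hterm, sum_sub_distrib, sum_add_distrib, ← sum_mul, hu, dotProduct]
  ring

lemma crossEntropy_expTilt_le (hw : w ∈ stdSimplex ℝ J) (hu : ∑ j, u j = 1)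
    (huw : ∀ j, w j = 0 → u j = 0) {a b : ℝ} (hf : ∀ j, f j ∈ Set.Icc a b) :
    crossEntropy u (expTilt f w) ≤ crossEntropy u w - (u - w) ⬝ᵥ f + (b - a) ^ 2 / 8 := by
  rw [crossEntropy_expTilt hw hu huw, sub_dotProduct]
  linarith [log_partitionFunction_le hw hf]

lemma uniformWeights_mem_stdSimplex {S : Finset J} (hS : S.Nonempty) :
    uniformWeights S ∈ stdSimplex ℝ J := by
  refine ⟨fun j => ?_, ?_⟩
  · unfold uniformWeights
    positivity
  · simp [uniformWeights, hS.ne_empty]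

lemma crossEntropy_uniformWeights {S : Finset J} (hu : ∑ j, u j = 1) (huS : ∀ j ∉ S, u j = 0) :
    crossEntropy u (uniformWeights S) = log #S := by
  have hterm (j : J) : u j * log (uniformWeights S j) = u j * -log #S := by
    by_cases hj : j ∈ S
    · simp [uniformWeights, hj]
    · simp [huS j hj]
  simp only [crossEntropy, hterm, ← sum_mul, hu]
  ring

variable {α : Type*} [LinearOrder α]

/-- The weights `x` are those of the exponential-weights algorithm run along the slots of `W`, in
increasing order, with initial weights `w₀` and payoffs `f`. -/
structure IsExpWeightsRun (W : Finset α) (w₀ : J → ℝ) (f x : α → J → ℝ) : Prop where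
  first : ∀ t, IsLeast (W : Set α) t → x t = w₀
  next : ∀ s ∈ W, ∀ t, IsLeast {u | u ∈ W ∧ s < u} t → x t = expTilt (f s) (x s)

namespace IsExpWeightsRun

variable {W : Finset α} {w₀ : J → ℝ} {f x : α → J → ℝ}

lemma mem_stdSimplex (h : IsExpWeightsRun W w₀ f x) (hw₀ : w₀ ∈ stdSimplex ℝ J) :
    ∀ t ∈ W, x t ∈ stdSimplex ℝ J :=
  forall_mem_of_isLeast_of_next (fun t ht => h.first t ht ▸ hw₀)
    fun s hs t ht ih => h.next s hs t ht ▸ expTilt_mem_stdSimplex ih (f s)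

lemma eq_zero_iff (h : IsExpWeightsRun W w₀ f x) (hw₀ : w₀ ∈ stdSimplex ℝ J) {j : J} :
    ∀ t ∈ W, (x t j = 0 ↔ w₀ j = 0) :=
  forall_mem_of_isLeast_of_next (fun t ht => by rw [h.first t ht]) fun s hs t ht ih => by
    rw [h.next s hs t ht, expTilt_eq_zero_iff (h.mem_stdSimplex hw₀ s hs), ih]

lemma sum_dotProduct_le (h : IsExpWeightsRun W w₀ f x) (hw₀ : w₀ ∈ stdSimplex ℝ J)
    (hu : u ∈ stdSimplex ℝ J) (huw₀ : ∀ j, w₀ j = 0 → u j = 0) {a b : ℝ}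
    (hf : ∀ t ∈ W, ∀ j, f t j ∈ Set.Icc a b) :
    ∑ t ∈ W, (u - x t) ⬝ᵥ f t ≤ crossEntropy u w₀ + #W * ((b - a) ^ 2 / 8) := by
  have hx := h.mem_stdSimplex hw₀
  have hdecrease (t : α) (ht : t ∈ W) : (u - x t) ⬝ᵥ f t - (b - a) ^ 2 / 8 +
      crossEntropy u (expTilt (f t) (x t)) ≤ crossEntropy u (x t) := by
    linarith [crossEntropy_expTilt_le (hx t ht) hu.2
      (fun j hj => huw₀ j ((h.eq_zero_iff hw₀ t ht).1 hj)) (hf t ht)]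
  rw [← sub_le_iff_le_add, ← nsmul_eq_mul, ← sum_const, ← sum_sub_distrib]
  rcases W.eq_empty_or_nonempty with rfl | hW
  · simpa using crossEntropy_nonneg hu.1 hw₀
  · have hmin := W.isLeast_min' hW
    rw [← h.first _ hmin]
    refine sum_le_of_isLeast_of_next (Φ := fun t => crossEntropy u (x t)) (fun t ht => ?_)
      (fun s hs t ht => h.next s hs t ht ▸ hdecrease s hs) hmin
    linarith [hdecrease t ht, crossEntropy_nonneg hu.1 (expTilt_mem_stdSimplex (hx t ht) (f t))]

lemma linear_regret_le {η L : ℝ} {g : α → J → ℝ} (h : IsExpWeightsRun W w₀ (fun t => -η • g t) x)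
    (hη : 0 < η) (hw₀ : w₀ ∈ stdSimplex ℝ J) (hu : u ∈ stdSimplex ℝ J)
    (huw₀ : ∀ j, w₀ j = 0 → u j = 0) (hg : ∀ t ∈ W, ∀ j, |g t j| ≤ L) :
    ∑ t ∈ W, g t ⬝ᵥ (x t - u) ≤ crossEntropy u w₀ / η + #W * (η * L ^ 2 / 2) := by
  have hpayoff : ∀ t ∈ W, ∀ j, (-η • g t) j ∈ Set.Icc (-(η * L)) (η * L) := fun t ht j => by
    rw [Set.mem_Icc, ← abs_le, Pi.smul_apply, smul_eq_mul, abs_mul, abs_neg, abs_of_pos hη]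
    exact mul_le_mul_of_nonneg_left (hg t ht j) hη.le
  have hflip (t : α) : (u - x t) ⬝ᵥ (-η • g t) = η * (g t ⬝ᵥ (x t - u)) := by
    rw [dotProduct_smul, dotProduct_comm, ← neg_sub (x t) u, dotProduct_neg, smul_eq_mul,
      neg_mul_neg]
  have hgain := h.sum_dotProduct_le hw₀ hu huw₀ hpayoff
  simp only [hflip, ← mul_sum] at hgain
  calc ∑ t ∈ W, g t ⬝ᵥ (x t - u)
      ≤ (crossEntropy u w₀ + #W * ((η * L - -(η * L)) ^ 2 / 8)) / η := (le_div_iff₀' hη).2 hgain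
    _ = crossEntropy u w₀ / η + #W * (η * L ^ 2 / 2) := by
      field_simp
      ring

lemma sum_sub_le_of_gradient_inequality {I : Type*} [Fintype I] {η L : ℝ} {g x : α → I → J → ℝ}
    {u w₀ : I → J → ℝ} {c c' : α → ℝ}
    (h : ∀ i, IsExpWeightsRun W (w₀ i) (fun t => -η • g t i) (fun t => x t i)) (hη : 0 < η)
    (hw₀ : ∀ i, w₀ i ∈ stdSimplex ℝ J) (hu : ∀ i, u i ∈ stdSimplex ℝ J)
    (huw₀ : ∀ i j, w₀ i j = 0 → u i j = 0) (hg : ∀ t ∈ W, ∀ i j, |g t i j| ≤ L)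
    (hgradient : ∀ t ∈ W, c t + ∑ i, g t i ⬝ᵥ (u i - x t i) ≤ c' t) :
    ∑ t ∈ W, (c t - c' t) ≤
      (∑ i, crossEntropy (u i) (w₀ i)) / η + #W * (η * Fintype.card I * L ^ 2 / 2) := by
  have hlinear (t : α) (ht : t ∈ W) : c t - c' t ≤ ∑ i, g t i ⬝ᵥ (x t i - u i) := by
    simp only [← neg_sub (u _), dotProduct_neg, sum_neg_distrib]
    linarith [hgradient t ht]
  calc ∑ t ∈ W, (c t - c' t) ≤ ∑ t ∈ W, ∑ i, g t i ⬝ᵥ (x t i - u i) := sum_le_sum hlinear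
    _ = ∑ i, ∑ t ∈ W, g t i ⬝ᵥ (x t i - u i) := sum_comm
    _ ≤ ∑ i, (crossEntropy (u i) (w₀ i) / η + #W * (η * L ^ 2 / 2)) := sum_le_sum fun i _ =>
      (h i).linear_regret_le hη (hw₀ i) (hu i) (huw₀ i) fun t ht => hg t ht i
    _ = (∑ i, crossEntropy (u i) (w₀ i)) / η + #W * (η * Fintype.card I * L ^ 2 / 2) := by
      rw [sum_add_distrib, ← sum_div, sum_const, card_univ, nsmul_eq_mul]
      ring

end IsExpWeightsRun

end ExponentialWeights

/-- PerOnE regret bound with per-location constants. -/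
theorem perone_regret_per_location
    {I J : Type*} [Fintype I] [Fintype J] [Nonempty I] [Nonempty J]
    -- neighbourhoods
    (N : I → Finset J) (hN : ∀ i, (N i).Nonempty)
    -- horizon, windows forming a partition of the time slots
    (T K : ℕ) (hT : 0 < T) (hK : 0 < K)
    (W : Fin K → Finset (Fin T))
    (hW : ∀ t : Fin T, ∃! k, t ∈ W k)
    -- stepsize and Lipschitz constant
    (η L : ℝ) (hη : 0 < η) (hL : 0 ≤ L)
    -- feasible set Ω' : product of probability simplices
    (Ω' : Set (I → J → ℝ))
    (hΩ' : Ω' = {p | (∀ i j, 0 ≤ p i j) ∧ ∀ i, ∑ j, p i j = 1})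
    -- per-slot costs V(·, λ(t)) with gradients G(t, ·)
    (V : Fin T → (I → J → ℝ) → ℝ)
    (G : Fin T → (I → J → ℝ) → I → J → ℝ)
    -- convexity and differentiability on Ω' (first-order gradient inequality)
    (hconv : ∀ t : Fin T, ∀ p ∈ Ω', ∀ q ∈ Ω',
      V t p + ∑ i, ∑ j, G t p i j * (q i j - p i j) ≤ V t q)
    -- ‖∇V(pol, λ(t))‖_∞ ≤ L on Ω'
    (hgrad : ∀ t : Fin T, ∀ p ∈ Ω', ∀ i j, |G t p i j| ≤ L)
    -- the PerOnE iterates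
    (pol : Fin T → I → J → ℝ)
    -- initialization at the first slot of each window: uniform over N^i
    (hinit : ∀ k, ∀ t ∈ W k, (∀ s ∈ W k, t ≤ s) →
      ∀ i j, pol t i j = if j ∈ N i then (1 : ℝ) / ((N i).card : ℝ) else 0)
    -- exponentiated update at every later slot, from the previous slot of the same window
    (hstep : ∀ k, ∀ s ∈ W k, ∀ t ∈ W k, s < t → (∀ u ∈ W k, s < u → t ≤ u) →
      ∀ i j, pol t i j =
        pol s i j * Real.exp (-η * G s (pol s) i j) /
          ∑ j' : J, pol s i j' * Real.exp (-η * G s (pol s) i j'))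
    -- arbitrary per-window comparators in Ω' supported on the neighbourhoods
    (polstar : Fin K → I → J → ℝ)
    (hpolstar : ∀ k, polstar k ∈ Ω' ∧ ∀ i j, j ∉ N i → polstar k i j = 0) :
    -- regret bound with per-location constants
    (∑ t, V t (pol t)) - (∑ k, ∑ t ∈ W k, V t (polstar k)) ≤
      (K : ℝ) * (∑ i, Real.log ((N i).card : ℝ)) / η +
        η * (T : ℝ) * (Fintype.card I : ℝ) * L ^ 2 / 2 := by
  have hfeasible (p : I → J → ℝ) : p ∈ Ω' ↔ ∀ i, p i ∈ stdSimplex ℝ J := by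
    simp [hΩ', stdSimplex, forall_and]
  have huniform (i : I) := uniformWeights_mem_stdSimplex (hN i)
  have hrun (k : Fin K) (i : I) : IsExpWeightsRun (W k) (uniformWeights (N i))
      (fun t => -η • G t (pol t) i) (fun t => pol t i) :=
    ⟨fun t ht => funext (hinit k t ht.1 (fun _ hs => ht.2 hs) i), fun s hs t ht =>
      funext (hstep k s hs t ht.1.1 ht.1.2 (fun _ hu hsu => ht.2 ⟨hu, hsu⟩) i)⟩
  have hpol (k : Fin K) (t : Fin T) (ht : t ∈ W k) : pol t ∈ Ω' :=
    (hfeasible _).2 fun i => (hrun k i).mem_stdSimplex (huniform i) t ht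
  have hwindow (k : Fin K) : ∑ t ∈ W k, (V t (pol t) - V t (polstar k)) ≤
      (∑ i, log #(N i)) / η + #(W k) * (η * Fintype.card I * L ^ 2 / 2) := by
    obtain ⟨hmem, hsupp⟩ := hpolstar k
    have hstar := (hfeasible _).1 hmem
    simp only [← fun i => crossEntropy_uniformWeights (hstar i).2 (hsupp i)]
    exact IsExpWeightsRun.sum_sub_le_of_gradient_inequality (hrun k) hη huniform hstar
      (fun i j hj => hsupp i j (uniformWeights_eq_zero_iff.1 hj))
      (fun t ht => hgrad t _ (hpol k t ht)) (fun t ht => hconv t _ (hpol k t ht) _ hmem)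
  have hslots : ∑ k, (#(W k) : ℝ) = T := by
    simpa using sum_sum_eq_sum_of_existsUnique_mem hW fun _ => (1 : ℝ)
  simp only [← sum_sum_eq_sum_of_existsUnique_mem hW, ← sum_sub_distrib]
  refine (sum_le_sum fun k _ => hwindow k).trans_eq ?_
  rw [sum_add_distrib, ← sum_mul, hslots, sum_const, card_univ, Fintype.card_fin, nsmul_eq_mul]
  ring
end

section
/- Strong convexity of the modified entropic regularizer over the product of simplices: For all π₁, π₂ ∈ Ω' such that π₁(i,j) > 0 for all (i,j), it holds that h(π₂) ≥ h(π₁) + Σ_{i∈I} Σ_{j∈J} (1 + log π₁(i,j))·(π₂(i,j) − π₁(i,j)) + (1/(2·|I|))·‖π₂ − π₁‖₁², i.e., h is (1/|I|)-strongly convex with respect to the total 1-norm on Ω'. -/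
open Finset Real

/-!
Put `p = pol₁` and `q = pol₂`. The two sides without the quadratic term differ by the
Kullback–Leibler divergence `∑ p * klFun (q / p)`, taken over the single index set `I × J`. The
bound `3 / 2 * ((x - 1) ^ 2 / (x + 2)) ≤ klFun x` holds because, once the denominator is cleared,
the difference of its sides is convex and vanishes to second order at `1`. Summing it with
Sedrakyan's form of the Cauchy–Schwarz inequality gives Pinsker's inequality for arbitrary masses,
with constant `3 / 2 / (∑ q + 2 * ∑ p)`. Policies have total mass `|I|`, which makes this constant
`1 / (2 * |I|)`.
-/

open InformationTheory

lemma hasDerivAt_mul_klFun_sub_sq {x : ℝ} (hx : x ≠ 0) :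
    HasDerivAt (fun x => 2 * (x + 2) * klFun x - 3 * (x - 1) ^ 2)
      (4 * ((x + 1) * log x - 2 * (x - 1))) x := by
  have hprod := (((hasDerivAt_id' x).add_const 2).const_mul 2).mul (hasDerivAt_klFun hx)
  have hsq := (((hasDerivAt_id' x).sub_const 1).pow 2).const_mul 3
  refine (hprod.sub hsq).congr_deriv ?_
  simp only [klFun_apply]
  ring

lemma hasDerivAt_add_one_mul_log_sub {x : ℝ} (hx : x ≠ 0) :
    HasDerivAt (fun x => 4 * ((x + 1) * log x - 2 * (x - 1))) (4 * (log x - (1 - x⁻¹))) x := by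
  have hprod := ((hasDerivAt_id' x).add_const 1).mul (hasDerivAt_log hx)
  have hlin := ((hasDerivAt_id' x).sub_const 1).const_mul 2
  refine ((hprod.sub hlin).const_mul 4).congr_deriv ?_
  field_simp
  ring

lemma convexOn_mul_klFun_sub_sq :
    ConvexOn ℝ (Set.Ici 0) fun x => 2 * (x + 2) * klFun x - 3 * (x - 1) ^ 2 := by
  have hcont : Continuous fun x => 2 * (x + 2) * klFun x - 3 * (x - 1) ^ 2 := by fun_prop
  refine convexOn_of_hasDerivWithinAt2_nonneg (convex_Ici 0) hcont.continuousOn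
    (f' := fun x => 4 * ((x + 1) * log x - 2 * (x - 1))) (f'' := fun x => 4 * (log x - (1 - x⁻¹)))
    ?_ ?_ ?_ <;> simp only [interior_Ici, Set.mem_Ioi] <;> intro x hx
  · exact (hasDerivAt_mul_klFun_sub_sq hx.ne').hasDerivWithinAt
  · exact (hasDerivAt_add_one_mul_log_sub hx.ne').hasDerivWithinAt
  · exact mul_nonneg zero_le_four (sub_nonneg.mpr (one_sub_inv_le_log_of_pos hx))

lemma sq_div_le_klFun {x : ℝ} (hx : 0 ≤ x) : 3 / 2 * ((x - 1) ^ 2 / (x + 2)) ≤ klFun x := by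
  have hderiv :
      derivWithin (fun x => 2 * (x + 2) * klFun x - 3 * (x - 1) ^ 2) (Set.Ioi 1) 1 = 0 := by
    rw [(hasDerivAt_mul_klFun_sub_sq one_ne_zero).hasDerivWithinAt.derivWithin
      (uniqueDiffWithinAt_Ioi 1)]
    simp
  have hmin := convexOn_mul_klFun_sub_sq.isMinOn_of_rightDeriv_eq_zero (by simp) hderiv
  have hnonneg : 0 ≤ 2 * (x + 2) * klFun x - 3 * (x - 1) ^ 2 := by
    simpa [klFun_one] using isMinOn_iff.mp hmin x hx
  rw [← mul_div_assoc, div_le_iff₀ (by positivity)]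
  linarith

lemma sq_div_le_mul_klFun_div {p q : ℝ} (hp : 0 < p) (hq : 0 ≤ q) :
    3 / 2 * ((q - p) ^ 2 / (q + 2 * p)) ≤ p * klFun (q / p) :=
  calc 3 / 2 * ((q - p) ^ 2 / (q + 2 * p))
      = p * (3 / 2 * ((q / p - 1) ^ 2 / (q / p + 2))) := by field_simp
    _ ≤ p * klFun (q / p) := by gcongr; exact sq_div_le_klFun (by positivity)

lemma mul_klFun_div {p : ℝ} (hp : p ≠ 0) (q : ℝ) :
    p * klFun (q / p) = q * log q - (p * log p + (1 + log p) * (q - p)) := by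
  rcases eq_or_ne q 0 with rfl | hq
  · rw [zero_div, klFun_zero]
    ring
  · rw [klFun_apply, log_div hq hp]
    field_simp
    ring

section FiniteSums

variable {ι : Type*} (s : Finset ι) {p q : ι → ℝ}

/-- Pinsker's inequality for arbitrary masses; for probability vectors the constant is `1 / 2`. -/
lemma sq_sum_abs_sub_div_le_sum_mul_klFun_div (hp : ∀ k ∈ s, 0 < p k) (hq : ∀ k ∈ s, 0 ≤ q k) :
    3 / 2 * ((∑ k ∈ s, |q k - p k|) ^ 2 / (∑ k ∈ s, q k + 2 * ∑ k ∈ s, p k))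
      ≤ ∑ k ∈ s, p k * klFun (q k / p k) := by
  have hpos : ∀ k ∈ s, 0 < q k + 2 * p k := fun k hk => by linarith [hp k hk, hq k hk]
  calc 3 / 2 * ((∑ k ∈ s, |q k - p k|) ^ 2 / (∑ k ∈ s, q k + 2 * ∑ k ∈ s, p k))
      = 3 / 2 * ((∑ k ∈ s, |q k - p k|) ^ 2 / ∑ k ∈ s, (q k + 2 * p k)) := by
        rw [sum_add_distrib, mul_sum]
    _ ≤ 3 / 2 * ∑ k ∈ s, |q k - p k| ^ 2 / (q k + 2 * p k) := by
        gcongr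
        exact sq_sum_div_le_sum_sq_div s _ hpos
    _ = ∑ k ∈ s, 3 / 2 * ((q k - p k) ^ 2 / (q k + 2 * p k)) := by
        simp only [sq_abs, mul_sum]
    _ ≤ ∑ k ∈ s, p k * klFun (q k / p k) :=
        sum_le_sum fun k hk => sq_div_le_mul_klFun_div (hp k hk) (hq k hk)

theorem modified_entropy_strongly_convex_product_general
    (hp : ∀ k ∈ s, 0 < p k) (hq : ∀ k ∈ s, 0 ≤ q k) :
    (∑ k ∈ s, p k * log (p k)) + (∑ k ∈ s, (1 + log (p k)) * (q k - p k))
      + 3 / 2 * ((∑ k ∈ s, |q k - p k|) ^ 2 / (∑ k ∈ s, q k + 2 * ∑ k ∈ s, p k))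
      ≤ ∑ k ∈ s, q k * log (q k) := by
  have hdiv : ∑ k ∈ s, p k * klFun (q k / p k) = ∑ k ∈ s, q k * log (q k)
      - (∑ k ∈ s, p k * log (p k) + ∑ k ∈ s, (1 + log (p k)) * (q k - p k)) := by
    rw [← sum_add_distrib, ← sum_sub_distrib]
    exact sum_congr rfl fun k hk => mul_klFun_div (hp k hk).ne' (q k)
  linarith [sq_sum_abs_sub_div_le_sum_mul_klFun_div s hp hq]

end FiniteSums

/-- Strong convexity of the modified entropic regularizer over the product of simplices:
`h` is (1/|I|)-strongly convex w.r.t. the total 1-norm on Ω'. -/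
theorem modified_entropy_strongly_convex_product
    {I J : Type*} [Fintype I] [Fintype J] [Nonempty I] [Nonempty J]
    (pol₁ pol₂ : I → J → ℝ)
    (h₁ : (∀ i j, 0 ≤ pol₁ i j) ∧ ∀ i, ∑ j, pol₁ i j = 1)
    (h₂ : (∀ i j, 0 ≤ pol₂ i j) ∧ ∀ i, ∑ j, pol₂ i j = 1)
    (hpos : ∀ i j, 0 < pol₁ i j) :
    (∑ i, ∑ j, pol₁ i j * Real.log (pol₁ i j))
      + (∑ i, ∑ j, (1 + Real.log (pol₁ i j)) * (pol₂ i j - pol₁ i j))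
      + (1 / (2 * (Fintype.card I : ℝ))) * (∑ i, ∑ j, |pol₂ i j - pol₁ i j|) ^ 2
      ≤ ∑ i, ∑ j, pol₂ i j * Real.log (pol₂ i j) := by
  have hconst (x : ℝ) : 1 / (2 * (Fintype.card I : ℝ)) * x
      = 3 / 2 * (x / (Fintype.card I + 2 * Fintype.card I)) := by
    field_simp
    norm_num
  simpa only [hconst, Fintype.sum_prod_type, h₁.2, h₂.2, sum_const, card_univ, nsmul_one] using
    modified_entropy_strongly_convex_product_general univ (p := fun x : I × J => pol₁ x.1 x.2)
      (q := fun x => pol₂ x.1 x.2) (fun x _ => hpos x.1 x.2) (fun x _ => h₂.1 x.1 x.2)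
end

section
/- Lipschitz continuity of the α-fair cost on the load-feasible region: For every α ≥ 0, λ : I → [0,∞), c : J × I → (0,∞) and ρ₀ ∈ (0,1), and for all π, π' ∈ D = { π ∈ Ω' : ρ_j(π) ≤ ρ₀ for all j ∈ J }, it holds that |φ_α(π) − φ_α(π')| ≤ (1−ρ₀)^{−α} · ( max_{j∈J, i∈I} λ(i)/c(j,i) ) · ‖π − π'‖₁. -/
/-!
For every `α`, including `α = 1`, the per-AP cost has derivative `(1 - x) ^ (-α)`, which for
`0 ≤ α` is at most `(1 - ρ₀) ^ (-α)` on the convex set `(-∞, ρ₀]`; so the cost is Lipschitz there by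
the mean value inequality. The loads are linear in the policy, and the entry `(i, j)` of the policy
enters only the load of AP `j`, so the load vector is `ℓ¹`-Lipschitz with the largest weight as
constant.
-/

open Finset Real

/-- The `α`-fair cost `u_α` of a single AP as a function of its load, meant for loads `x < 1`;
for `x ≥ 1` the values come from Mathlib's conventions for `log` and `rpow`. -/
noncomputable def alphaFairUtility (α x : ℝ) : ℝ :=
  if α = 1 then -log (1 - x) else (1 - x) ^ (1 - α) / (α - 1)

/-- The load of AP `j` under the policy `p`, where the weight `w j i` is the load that location
`i` puts on `j` when all of its traffic goes there: `λ(i) / c(j,i)` in the association problem. -/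
def apLoad {I J : Type*} [Fintype I] (w : J → I → ℝ) (p : I → J → ℝ) (j : J) : ℝ :=
  ∑ i, w j i * p i j

lemma hasDerivAt_alphaFairUtility (α : ℝ) {x : ℝ} (hx : x ≠ 1) :
    HasDerivAt (alphaFairUtility α) ((1 - x) ^ (-α)) x := by
  have hx' : 1 - x ≠ 0 := sub_ne_zero.mpr hx.symm
  have hsub : HasDerivAt (fun y : ℝ => 1 - y) (-1) x := (hasDerivAt_id x).const_sub 1
  unfold alphaFairUtility
  by_cases hα : α = 1
  · simp only [hα, if_true]
    refine (hsub.log hx').neg.congr_deriv ?_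
    rw [rpow_neg_one, neg_div, neg_neg, one_div]
  · simp only [hα, if_false]
    have hα' : α - 1 ≠ 0 := sub_ne_zero.mpr hα
    refine ((hsub.rpow_const (p := 1 - α) (Or.inl hx')).div_const (α - 1)).congr_deriv ?_
    rw [sub_sub_cancel_left, div_eq_iff hα']
    ring

lemma abs_alphaFairUtility_sub_le {α r x y : ℝ} (hα : 0 ≤ α) (hr : r < 1)
    (hx : x ≤ r) (hy : y ≤ r) :
    |alphaFairUtility α x - alphaFairUtility α y| ≤ (1 - r) ^ (-α) * |x - y| := by
  have hderiv : ∀ z ∈ Set.Iic r,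
      HasDerivWithinAt (alphaFairUtility α) ((1 - z) ^ (-α)) (Set.Iic r) z := fun z hz =>
    (hasDerivAt_alphaFairUtility α (hz.trans_lt hr).ne).hasDerivWithinAt
  have hbound : ∀ z ∈ Set.Iic r, ‖(1 - z) ^ (-α)‖ ≤ (1 - r) ^ (-α) := fun z hz => by
    have hrz : 1 - r ≤ 1 - z := sub_le_sub_left hz 1
    have hr' : 0 < 1 - r := sub_pos.mpr hr
    rw [norm_of_nonneg (rpow_nonneg (hr'.le.trans hrz) _)]
    exact rpow_le_rpow_of_nonpos hr' hrz (neg_nonpos.mpr hα)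
  exact (convex_Iic r).norm_image_sub_le_of_norm_hasDerivWithin_le hderiv hbound hy hx

lemma abs_sum_alphaFairUtility_sub_le {J : Type*} [Fintype J] {α r : ℝ} (hα : 0 ≤ α) (hr : r < 1)
    {x y : J → ℝ} (hx : ∀ j, x j ≤ r) (hy : ∀ j, y j ≤ r) :
    |∑ j, alphaFairUtility α (x j) - ∑ j, alphaFairUtility α (y j)| ≤
      (1 - r) ^ (-α) * ∑ j, |x j - y j| := by
  rw [← sum_sub_distrib, mul_sum]
  exact (abs_sum_le_sum_abs _ _).trans
    (sum_le_sum fun j _ => abs_alphaFairUtility_sub_le hα hr (hx j) (hy j))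

section Load

variable {I J : Type*} [Fintype I] {w : J → I → ℝ} {K : ℝ}

lemma abs_apLoad_sub_le {j : J} (hw : ∀ i, |w j i| ≤ K) (p q : I → J → ℝ) :
    |apLoad w p j - apLoad w q j| ≤ K * ∑ i, |p i j - q i j| := by
  simp only [apLoad, ← sum_sub_distrib, ← mul_sub, mul_sum]
  refine (abs_sum_le_sum_abs _ _).trans (sum_le_sum fun i _ => ?_)
  rw [abs_mul]
  exact mul_le_mul_of_nonneg_right (hw i) (abs_nonneg _)

lemma sum_abs_apLoad_sub_le [Fintype J] (hw : ∀ j i, |w j i| ≤ K) (p q : I → J → ℝ) :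
    ∑ j, |apLoad w p j - apLoad w q j| ≤ K * ∑ i, ∑ j, |p i j - q i j| := by
  rw [sum_comm, mul_sum]
  exact sum_le_sum fun j _ => abs_apLoad_sub_le (hw j) p q

theorem alpha_fair_cost_lipschitz_general [Fintype J] {α r : ℝ} (hα : 0 ≤ α) (hr : r < 1)
    (hw : ∀ j i, |w j i| ≤ K) {p q : I → J → ℝ}
    (hp : ∀ j, apLoad w p j ≤ r) (hq : ∀ j, apLoad w q j ≤ r) :
    |∑ j, alphaFairUtility α (apLoad w p j) - ∑ j, alphaFairUtility α (apLoad w q j)| ≤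
      (1 - r) ^ (-α) * K * ∑ i, ∑ j, |p i j - q i j| :=
  calc
    _ ≤ (1 - r) ^ (-α) * ∑ j, |apLoad w p j - apLoad w q j| :=
      abs_sum_alphaFairUtility_sub_le hα hr hp hq
    _ ≤ (1 - r) ^ (-α) * (K * ∑ i, ∑ j, |p i j - q i j|) :=
      mul_le_mul_of_nonneg_left (sum_abs_apLoad_sub_le hw p q)
        (rpow_nonneg (sub_nonneg.mpr hr.le) _)
    _ = (1 - r) ^ (-α) * K * ∑ i, ∑ j, |p i j - q i j| := (mul_assoc _ _ _).symm

end Load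

/-- Lipschitz continuity of the α-fair cost on the load-feasible region. -/
theorem alpha_fair_cost_lipschitz
    {I J : Type*} [Fintype I] [Fintype J] [Nonempty I] [Nonempty J]
    (α : ℝ) (hα : 0 ≤ α)
    (lam : I → ℝ) (hlam : ∀ i, 0 ≤ lam i)
    (c : J → I → ℝ) (hc : ∀ j i, 0 < c j i)
    (ρ₀ : ℝ) (hρ₀ : ρ₀ ∈ Set.Ioo (0 : ℝ) 1)
    -- AP loads
    (ρ : J → (I → J → ℝ) → ℝ)
    (hρ : ρ = fun j p => ∑ i, lam i * p i j / c j i)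
    -- the α-fair per-AP utility
    (u : ℝ → ℝ)
    (hu : u = fun x => if α = 1 then -Real.log (1 - x) else (1 - x) ^ (1 - α) / (α - 1))
    -- the load-feasible region
    (D : Set (I → J → ℝ))
    (hD : D = {p | ((∀ i j, 0 ≤ p i j) ∧ ∀ i, ∑ j, p i j = 1) ∧ ∀ j, ρ j p ≤ ρ₀})
    (pol pol' : I → J → ℝ) (hpol : pol ∈ D) (hpol' : pol' ∈ D) :
    |(∑ j, u (ρ j pol)) - ∑ j, u (ρ j pol')| ≤
      (1 - ρ₀) ^ (-α) *
        (Finset.univ.sup' Finset.univ_nonempty (fun q : J × I => lam q.2 / c q.1 q.2)) *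
        (∑ i, ∑ j, |pol i j - pol' i j|) := by
  have hw : ∀ j i, |lam i / c j i| ≤
      univ.sup' univ_nonempty (fun q : J × I => lam q.2 / c q.1 q.2) := fun j i =>
    (abs_of_nonneg (div_nonneg (hlam i) (hc j i).le)).trans_le
      (le_sup' (fun q : J × I => lam q.2 / c q.1 q.2) (mem_univ (j, i)))
  simp only [mul_div_right_comm] at hρ
  subst hρ hu hD
  exact alpha_fair_cost_lipschitz_general hα hρ₀.2 hw hpol.2 hpol'.2
end
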